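/- arXiv:2412.13619 — 7 statements merged into one kernel-verified Lean document; each statement's English description precedes it below -/
import Mathlib

section
/- Let f : ℝ^d → ℝ be a differentiable μ-strongly convex function with μ ≥ 0, and let γ > 0. Then for all x, y ∈ ℝ^d, ‖prox_{γf}(x) − prox_{γf}(y)‖² ≤ (1/(1 + γμ)²)·‖x − y‖². -/
/-!
The minimality of `px` and `py` gives the first-order conditions `γ ∇f(px) = x - px` and
`γ ∇f(py) = y - py` (`smul_gradient_eq_of_prox`). Adding the strong convexity inequalities at
`(px, py)` and `(py, px)` shows that `∇f` is `μ`-strongly monotone, which turns into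
`(1 + γμ) ‖px - py‖² ≤ ⟪x - y, px - py⟫`; Cauchy–Schwarz then gives
`(1 + γμ) ‖px - py‖ ≤ ‖x - y‖`.
-/

open RealInnerProductSpace

/-- First-order optimality condition for the proximity operator; convexity is not needed in
this direction. -/
theorem smul_gradient_eq_of_prox {d : ℕ} {f : EuclideanSpace ℝ (Fin d) → ℝ} {γ : ℝ}
    {x p : EuclideanSpace ℝ (Fin d)} (hf : DifferentiableAt ℝ f p)
    (hp : ∀ z : EuclideanSpace ℝ (Fin d),
      γ * f p + (1 / 2) * ‖p - x‖ ^ 2 ≤ γ * f z + (1 / 2) * ‖z - x‖ ^ 2) :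
    γ • gradient f p = x - p := by
  have hg := hf.hasGradientAt
  generalize gradient f p = g at hg ⊢
  have h1 := hg.hasFDerivAt.const_mul γ
  have h2 := (((hasFDerivAt_id (𝕜 := ℝ) p).sub_const x).norm_sq).const_mul (1 / 2 : ℝ)
  have h3 := IsLocalMin.hasFDerivAt_eq_zero
    (f := fun z => γ * f z + (1 / 2) * ‖z - x‖ ^ 2)
    (Filter.Eventually.of_forall hp) (h1.add h2)
  refine ext_inner_right ℝ fun v => ?_
  have h4 := DFunLike.congr_fun h3 v
  simp at h4
  rw [inner_smul_left, inner_sub_left]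
  simp only [conj_trivial]
  linarith

/-- Contractivity of the proximity operator of a `μ`-strongly convex function:
`‖prox_{γf}(x) − prox_{γf}(y)‖² ≤ (1/(1+γμ)²)·‖x − y‖²`.
Here `px` and `py` are the minimizers defining `prox_{γf}(x)` and `prox_{γf}(y)`. -/
theorem prox_contractivity
    (d : ℕ) (f : EuclideanSpace ℝ (Fin d) → ℝ) (μ γ : ℝ)
    (hμ : 0 ≤ μ) (hγ : 0 < γ)
    (hdiff : Differentiable ℝ f)
    (hsc : ∀ x y : EuclideanSpace ℝ (Fin d),
      f y ≥ f x + ⟪gradient f x, y - x⟫ + μ / 2 * ‖x - y‖ ^ 2)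
    (x y px py : EuclideanSpace ℝ (Fin d))
    (hpx : ∀ z : EuclideanSpace ℝ (Fin d),
      γ * f px + (1 / 2) * ‖px - x‖ ^ 2 ≤ γ * f z + (1 / 2) * ‖z - x‖ ^ 2)
    (hpy : ∀ z : EuclideanSpace ℝ (Fin d),
      γ * f py + (1 / 2) * ‖py - y‖ ^ 2 ≤ γ * f z + (1 / 2) * ‖z - y‖ ^ 2) :
    ‖px - py‖ ^ 2 ≤ (1 / (1 + γ * μ) ^ 2) * ‖x - y‖ ^ 2 := by
  have hx := smul_gradient_eq_of_prox (hdiff px) hpx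
  have hy := smul_gradient_eq_of_prox (hdiff py) hpy
  have h1 := hsc px py
  have h2 := hsc py px
  have hgx : γ * ⟪gradient f px, py - px⟫ = ⟪x - px, py - px⟫ := by
    rw [← hx, real_inner_smul_left]
  have hgy : γ * ⟪gradient f py, px - py⟫ = ⟪y - py, px - py⟫ := by
    rw [← hy, real_inner_smul_left]
  rw [norm_sub_rev py px] at h2
  have hmono : ⟪gradient f px, py - px⟫ + ⟪gradient f py, px - py⟫ + μ * ‖px - py‖ ^ 2 ≤ 0 := by
    linarith
  have hmul := mul_nonpos_of_nonneg_of_nonpos hγ.le hmono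
  have hid : ⟪x - px, py - px⟫ + ⟪y - py, px - py⟫
      = ‖px - py‖ ^ 2 - ⟪x - y, px - py⟫ := by
    rw [← real_inner_self_eq_norm_sq]
    simp only [inner_sub_left, inner_sub_right]
    ring
  have hcoer : (1 + γ * μ) * ‖px - py‖ ^ 2 ≤ ⟪x - y, px - py⟫ := by linarith
  have hcs := real_inner_le_norm (x - y) (px - py)
  have hpos : 0 < 1 + γ * μ := by positivity
  have hlip : (1 + γ * μ) * ‖px - py‖ ≤ ‖x - y‖ := by
    rcases (norm_nonneg (px - py)).eq_or_lt with h0 | h0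
    · rw [← h0, mul_zero]
      exact norm_nonneg _
    · refine le_of_mul_le_mul_right ?_ h0
      linarith
  rw [one_div_mul_eq_div, le_div_iff₀ (by positivity), mul_comm, ← mul_pow]
  exact pow_le_pow_left₀ (by positivity) hlip 2
end

section
/- Let each f_i : ℝ^d → ℝ (i = 1,…,n) be differentiable and μ-strongly convex with μ ≥ 0, let f = (1/n)∑ f_i, let x_* be a minimizer of f, let γ > 0, and fix points x_k, w_k ∈ ℝ^d. Define for each i the L-SVRP update x_{k+1}(i) = prox_{γ f_i}(x_k + γ(∇f_i(w_k) − ∇f(w_k))), the average x̄_{k+1} = (1/n)∑_{i=1}^n x_{k+1}(i), and ψ_i = f_i − f. Then for every y ∈ ℝ^d: (1/n)∑_{i=1}^n ‖x_{k+1}(i) − x_*‖² ≤ (1/(1+μγ))‖x_k − x_*‖² − (2/(μ + 1/γ))·[f(y) − f(x_*)] − (2/(μ + 1/γ))·(1/n)∑_{i=1}^n [ ⟨∇ψ_i(y) − ∇ψ_i(w_k), x_{k+1}(i) − y⟩ + ((μ + 1/γ)/2)‖x_{k+1}(i) − y‖² ] − (1/(1+μγ))‖y − x_k‖² − (2/(1+μγ))⟨x̄_{k+1}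 − y, y + γ∇f(y) − x_k⟩. -/
/-!
Put `c i = ∇ψ i (wk)` and `G i x = f i x - ⟪c i, x⟫ + ‖x - xk‖² / (2γ)`. Each `G i` is
`(μ + 1/γ)`-strongly convex and `X i` is its minimizer, so strong convexity, used once at `X i`
towards `xstar` and once at `y` towards `X i`, gives
`G i xstar ≥ G i y + ⟪∇G i y, X i - y⟫ + (μ + 1/γ)/2 * (‖X i - y‖² + ‖X i - xstar‖²)`.
Since `∑ i, c i = 0`, averaging over `i` turns `G i` into `F + ‖· - xk‖² / (2γ)`, and rescaling by
`2 / (μ + 1/γ)` yields the claim. The inequality for a single index, multiplied by `γ`, is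
`one_index_bound`; the optimality condition it relies on is `prox_optimality`.
-/

open RealInnerProductSpace Finset

/-- First-order optimality of a prox point: `γ ∇g(p) + p - v = 0`. -/
lemma prox_optimality {E : Type*} [NormedAddCommGroup E] [InnerProductSpace ℝ E] [CompleteSpace E]
    (g : E → ℝ) (hg : Differentiable ℝ g) (γ : ℝ) (v p : E)
    (hp : ∀ z, γ * g p + (1 / 2) * ‖p - v‖ ^ 2 ≤ γ * g z + (1 / 2) * ‖z - v‖ ^ 2) :
    γ • gradient g p = v - p := by
  have h1 : HasFDerivAt g (innerSL ℝ (gradient g p)) p :=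
    (hg p).hasGradientAt.hasFDerivAt
  have h2 : HasFDerivAt (fun z : E => ‖z - v‖ ^ 2)
      (2 • (innerSL ℝ (p - v)).comp (ContinuousLinearMap.id ℝ E)) p :=
    ((hasFDerivAt_id p).sub_const v).norm_sq
  have h3 := (h1.const_mul γ).add (h2.const_mul (1 / 2))
  have hmin : IsLocalMin (fun z => γ * g z + (1 / 2) * ‖z - v‖ ^ 2) p :=
    Filter.Eventually.of_forall hp
  have h0 := hmin.hasFDerivAt_eq_zero h3
  apply ext_inner_right ℝ
  intro u
  have hu := congrArg (fun L : E →L[ℝ] ℝ => L u) h0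
  have hu' : γ * ⟪gradient g p, u⟫ + (⟪p, u⟫ - ⟪v, u⟫) = 0 := by
    simpa using hu
  rw [real_inner_smul_left, inner_sub_left]
  linarith

/-- The strong-convexity estimate for a single index, multiplied by `γ`. Here `a` and `b` are the
gradients of `f i` at `X i` and `y`, `c` stands for `∇ψ i (wk)`, `q` for `∇F y`, and `fs`, `fx`,
`fy` are the values of `f i` at `xstar`, `X i`, `y`. -/
lemma one_index_bound {E : Type*} [NormedAddCommGroup E] [InnerProductSpace ℝ E]
    (μ γ fs fx fy : ℝ) (hγ : 0 < γ) (a b c q s x y k : E)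
    (ha : γ • a = k + γ • c - x)
    (h1 : fs ≥ fx + ⟪a, s - x⟫ + μ / 2 * ‖x - s‖ ^ 2)
    (h2 : fx ≥ fy + ⟪b, x - y⟫ + μ / 2 * ‖y - x‖ ^ 2) :
    (1 + μ * γ) * ‖x - s‖ ^ 2 ≤ ‖k - s‖ ^ 2 - 2 * γ * (fy - fs)
      - (2 * γ * ⟪b - q - c, x - y⟫ + (1 + μ * γ) * ‖x - y‖ ^ 2)
      - ‖y - k‖ ^ 2 - 2 * ⟪x - y, y + γ • q - k⟫ - 2 * γ * ⟪c, s - y⟫ := by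
  have h1' := mul_le_mul_of_nonneg_left h1 hγ.le
  have h2' := mul_le_mul_of_nonneg_left h2 hγ.le
  have e : γ * ⟪a, s - x⟫ = ⟪k + γ • c - x, s - x⟫ := by
    rw [← ha, real_inner_smul_left]
  rw [norm_sub_rev y x] at h2'
  have key : ‖k - s‖ ^ 2 - ‖y - k‖ ^ 2 - 2 * ⟪x - y, y + γ • q - k⟫ - 2 * γ * ⟪c, s - y⟫
      - 2 * γ * ⟪b - q - c, x - y⟫ - ‖x - y‖ ^ 2 - ‖x - s‖ ^ 2
      = -2 * ⟪k + γ • c - x, s - x⟫ - 2 * γ * ⟪b, x - y⟫ := by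
    simp only [← real_inner_self_eq_norm_sq, inner_sub_left, inner_sub_right, inner_add_left,
      inner_add_right, real_inner_smul_left, real_inner_smul_right]
    rw [real_inner_comm s k, real_inner_comm s x, real_inner_comm y k, real_inner_comm y x,
      real_inner_comm x k, real_inner_comm q x, real_inner_comm q y]
    ring
  linarith [h1', h2', e, key]

/-- Technical one-step lemma for L-SVRP (Lemma 4 of the paper): for any `y`,
the averaged squared distance of the prox updates `X i` to the minimizer `x_*`
is bounded by a contraction term plus correction terms. -/
theorem lsvrp_technical_lemma
    (d n : ℕ) (hn : 0 < n)
    (f : Fin n → EuclideanSpace ℝ (Fin d) → ℝ) (μ γ : ℝ)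
    (hμ : 0 ≤ μ) (hγ : 0 < γ)
    (hdiff : ∀ i, Differentiable ℝ (f i))
    (F : EuclideanSpace ℝ (Fin d) → ℝ)
    (hF : F = fun x => (1 / (n : ℝ)) * ∑ i, f i x)
    (hsc : ∀ i, ∀ x y : EuclideanSpace ℝ (Fin d),
      f i y ≥ f i x + ⟪gradient (f i) x, y - x⟫ + μ / 2 * ‖x - y‖ ^ 2)
    (xstar : EuclideanSpace ℝ (Fin d)) (hxstar : ∀ x, F xstar ≤ F x)
    (xk wk : EuclideanSpace ℝ (Fin d))
    (ψ : Fin n → EuclideanSpace ℝ (Fin d) → ℝ)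
    (hψ : ∀ i, ψ i = fun x => f i x - F x)
    (X : Fin n → EuclideanSpace ℝ (Fin d))
    (hX : ∀ i, ∀ z : EuclideanSpace ℝ (Fin d),
      γ * f i (X i)
          + (1 / 2) * ‖X i - (xk + γ • (gradient (f i) wk - gradient F wk))‖ ^ 2
        ≤ γ * f i z
          + (1 / 2) * ‖z - (xk + γ • (gradient (f i) wk - gradient F wk))‖ ^ 2)
    (xbar : EuclideanSpace ℝ (Fin d))
    (hxbar : xbar = (1 / (n : ℝ)) • ∑ i, X i)
    (y : EuclideanSpace ℝ (Fin d)) :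
    (1 / (n : ℝ)) * ∑ i, ‖X i - xstar‖ ^ 2
      ≤ (1 / (1 + μ * γ)) * ‖xk - xstar‖ ^ 2
        - (2 / (μ + 1 / γ)) * (F y - F xstar)
        - (2 / (μ + 1 / γ)) * ((1 / (n : ℝ)) * ∑ i,
            (⟪gradient (ψ i) y - gradient (ψ i) wk, X i - y⟫
              + ((μ + 1 / γ) / 2) * ‖X i - y‖ ^ 2))
        - (1 / (1 + μ * γ)) * ‖y - xk‖ ^ 2
        - (2 / (1 + μ * γ)) * ⟪xbar - y, y + γ • gradient F y - xk⟫ := by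
  have hn' : (n : ℝ) ≠ 0 := by positivity
  have hgrad : ∀ i z, HasGradientAt (f i) (gradient (f i) z) z :=
    fun i z => (hdiff i z).hasGradientAt
  have hFg : ∀ z, HasGradientAt F ((1 / (n : ℝ)) • ∑ i, gradient (f i) z) z := by
    intro z
    rw [hasGradientAt_iff_hasFDerivAt, hF]
    have h := (HasFDerivAt.fun_sum (u := Finset.univ)
      (fun i _ => (hgrad i z).hasFDerivAt)).const_mul (1 / (n : ℝ))
    simpa only [map_smul, map_sum] using h
  have hψg : ∀ i z, gradient (ψ i) z = gradient (f i) z - gradient F z := by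
    intro i z
    have h : HasGradientAt (ψ i) (gradient (f i) z - gradient F z) z := by
      rw [hψ i, hasGradientAt_iff_hasFDerivAt, map_sub]
      exact (hgrad i z).hasFDerivAt.sub (hFg z).differentiableAt.hasGradientAt.hasFDerivAt
    exact h.gradient
  have hsum0 : ∑ i, gradient (ψ i) wk = 0 := by
    simp only [hψg, Finset.sum_sub_distrib, Finset.sum_const, Finset.card_univ, Fintype.card_fin]
    rw [(hFg wk).gradient, ← Nat.cast_smul_eq_nsmul ℝ, smul_smul, mul_one_div_cancel hn',
      one_smul, sub_self]
  have hi : ∀ i, (1 + μ * γ) * ‖X i - xstar‖ ^ 2 ≤ ‖xk - xstar‖ ^ 2 - 2 * γ * (f i y - f i xstar)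
      - (2 * γ * ⟪gradient (ψ i) y - gradient (ψ i) wk, X i - y⟫
          + (1 + μ * γ) * ‖X i - y‖ ^ 2)
      - ‖y - xk‖ ^ 2 - 2 * ⟪X i - y, y + γ • gradient F y - xk⟫
      - 2 * γ * ⟪gradient (ψ i) wk, xstar - y⟫ := by
    intro i
    have hopt := prox_optimality (f i) (hdiff i) γ _ (X i) (hX i)
    rw [← hψg] at hopt
    rw [hψg i y]
    exact one_index_bound μ γ _ _ _ hγ _ _ _ _ _ _ _ _ hopt (hsc i (X i) xstar) (hsc i y (X i))
  have hS := Finset.sum_le_sum (s := Finset.univ) (fun i _ => hi i)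
  have hFy : ∀ z, ∑ i, f i z = n * F z := by
    intro z
    rw [hF]
    field_simp
  have hXsum : ∑ i, (X i - y) = (n : ℝ) • (xbar - y) := by
    rw [hxbar, smul_sub, smul_smul, mul_one_div_cancel hn', one_smul, Finset.sum_sub_distrib]
    simp [Nat.cast_smul_eq_nsmul]
  simp only [Finset.sum_sub_distrib, Finset.sum_add_distrib, ← Finset.mul_sum, ← sum_inner,
    hsum0, hXsum, hFy, inner_zero_left, real_inner_smul_left, Finset.sum_const, Finset.card_univ,
    Fintype.card_fin, nsmul_eq_mul] at hS
  rw [Finset.sum_add_distrib, ← Finset.mul_sum]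
  have hA : 0 < 1 + μ * γ := by positivity
  have hB : 2 / (μ + 1 / γ) = 2 * γ / (1 + μ * γ) := by
    field_simp
    ring
  have hm : μ + 1 / γ = (1 + μ * γ) / γ := by
    field_simp
    ring
  have hnpos : (0 : ℝ) < n := by positivity
  rw [hB, hm]
  rw [← sub_nonneg] at hS ⊢
  -- The claim is the summed inequality divided by `n * (1 + μ * γ)`.
  refine le_of_le_of_eq (div_nonneg hS (mul_pos hnpos hA).le) ?_
  field_simp
  ring
end

section
/- Let each f_i : ℝ^d → ℝ (i = 1,…,n) be differentiable and μ-strongly convex with μ ≥ 0, let f = (1/n)∑ f_i, let x_* be a minimizer of f, let γ > 0, and fix x_k, w_k ∈ ℝ^d. Define x_{k+1}(i) = prox_{γ f_i}(x_k + γ(∇f_i(w_k) − ∇f(w_k))), x̄_{k+1} = (1/n)∑_{i=1}^n x_{k+1}(i), and ψ_i = f_i − f. Then: (1/n)∑_{i=1}^n ‖x_{k+1}(i) − x_*‖² ≤ (1/(1+μγ))‖x_k − x_*‖² − (1/n)∑_{i=1}^n ‖x_{k+1}(i) − x̄_{k+1}‖² − (1/(1+μγ))‖x̄_{k+1} − x_k‖²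 − (2/(μ + 1/γ))·(1/n)∑_{i=1}^n ⟨∇ψ_i(x̄_{k+1}) − ∇ψ_i(w_k), x_{k+1}(i) − x̄_{k+1}⟩. -/
open RealInnerProductSpace Finset

/-!
By first-order optimality the prox point `X i` satisfies
`γ ∇f_i(X i) = x_k + γ ∇ψ_i(w_k) - X i`. Strong convexity of `f i` is used twice: from `X i` to
`x_*`, with this value of the gradient, and from `x̄` to `X i`. Adding the two
(`prox_step_ineq`) gives an inequality for each `i` with four leftover terms, which are harmless
after averaging: those linear in `X i - x̄` vanish because `x̄` is the mean of the `X i`, the one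
linear in `∇ψ_i(w_k)` vanishes because the `ψ i` sum to zero, and the function gap averages to
`F x̄ - F x_* ≥ 0`.
-/

/-- First-order optimality condition at a proximal point. -/
lemma prox_gradient_eq {E : Type*} [NormedAddCommGroup E] [InnerProductSpace ℝ E]
    [CompleteSpace E] {g : E → ℝ} {γ : ℝ} {p X : E} (hg : DifferentiableAt ℝ g X)
    (hX : ∀ z, γ * g X + (1 / 2) * ‖X - p‖ ^ 2 ≤ γ * g z + (1 / 2) * ‖z - p‖ ^ 2) :
    γ • gradient g X = p - X := by
  have hd := (hg.hasGradientAt.hasFDerivAt.const_mul γ).add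
    ((((hasFDerivAt_id (𝕜 := ℝ) X).sub_const p).norm_sq).const_mul (1 / 2))
  have hmin : IsLocalMin (fun z => γ * g z + (1 / 2) * ‖z - p‖ ^ 2) X :=
    Filter.Eventually.of_forall hX
  have h0 := hmin.hasFDerivAt_eq_zero hd
  rw [← sub_eq_zero]
  refine ext_inner_right ℝ fun v => ?_
  have hv := DFunLike.congr_fun h0 v
  simp at hv
  simp only [inner_sub_left, inner_smul_left, inner_zero_left, RCLike.conj_to_real,
    inner_gradient_left]
  linarith

/-- The one-sample estimate behind the bound. Here `a` plays the role of `∇ψ_i(x̄)`, `G` that of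
`∇F(x̄)` and `c` that of `∇ψ_i(w_k)`. -/
lemma prox_step_ineq {E : Type*} [NormedAddCommGroup E] [InnerProductSpace ℝ E]
    [CompleteSpace E] {g : E → ℝ} {μ γ : ℝ} (hγ : 0 < γ) (hg : Differentiable ℝ g)
    (hsc : ∀ x y, g y ≥ g x + ⟪gradient g x, y - x⟫ + μ / 2 * ‖x - y‖ ^ 2)
    {xk c X : E}
    (hX : ∀ z, γ * g X + (1 / 2) * ‖X - (xk + γ • c)‖ ^ 2
      ≤ γ * g z + (1 / 2) * ‖z - (xk + γ • c)‖ ^ 2)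
    (xs xb a G : E) (ha : gradient g xb = a + G) :
    (1 + μ * γ) * ‖X - xs‖ ^ 2 + (1 + μ * γ) * ‖X - xb‖ ^ 2 + 2 * γ * ⟪a - c, X - xb⟫
      + 2 * γ * (g xb - g xs) + 2 * ⟪xb - xk, X - xb⟫ + 2 * γ * ⟪G, X - xb⟫
      + 2 * γ * ⟪c, xs - xb⟫ ≤ ‖xk - xs‖ ^ 2 - ‖xb - xk‖ ^ 2 := by
  have h1 := mul_le_mul_of_nonneg_left (hsc X xs) hγ.le
  have h2 := mul_le_mul_of_nonneg_left (hsc xb X) hγ.le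
  have e1 : γ * ⟪gradient g X, xs - X⟫ = ⟪xk + γ • c - X, xs - X⟫ := by
    rw [← prox_gradient_eq (hg X) hX, real_inner_smul_left]
  rw [norm_sub_rev xb X, ha] at h2
  -- Expand everything about `xb`, so that only inner products of `X - xb`, `xs - xb`, `xk - xb`
  -- and the gradients occur.
  obtain ⟨u, rfl⟩ : ∃ u, X = xb + u := ⟨X - xb, by abel⟩
  obtain ⟨s, rfl⟩ : ∃ s, xs = xb + s := ⟨xs - xb, by abel⟩
  obtain ⟨k, rfl⟩ : ∃ k, xk = xb + k := ⟨xk - xb, by abel⟩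
  have n1 : ‖xb + k - (xb + s)‖ ^ 2 = ‖k‖ ^ 2 - 2 * ⟪k, s⟫ + ‖s‖ ^ 2 := by
    rw [add_sub_add_left_eq_sub, norm_sub_sq_real]
  have n2 : ‖xb + u - (xb + s)‖ ^ 2 = ‖u‖ ^ 2 - 2 * ⟪u, s⟫ + ‖s‖ ^ 2 := by
    rw [add_sub_add_left_eq_sub, norm_sub_sq_real]
  have n3 : ⟪xb + k + γ • c - (xb + u), xb + s - (xb + u)⟫
      = ⟪k, s⟫ - ⟪k, u⟫ + γ * ⟪c, s⟫ - γ * ⟪c, u⟫ - ⟪u, s⟫ + ‖u‖ ^ 2 := by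
    rw [show xb + k + γ • c - (xb + u) = k + γ • c - u by abel, add_sub_add_left_eq_sub]
    simp only [inner_sub_left, inner_sub_right, inner_add_left, real_inner_smul_left,
      real_inner_self_eq_norm_sq]
    ring
  have n4 : ‖xb - (xb + k)‖ ^ 2 = ‖k‖ ^ 2 := by simp
  have n5 : xb - (xb + k) = -k := by abel
  rw [n3] at e1
  rw [n1, n4, n5]
  simp only [add_sub_cancel_left, inner_sub_left, inner_add_left, inner_neg_left] at h2 ⊢
  rw [mul_add, mul_add, e1] at h1
  rw [n2] at h1 ⊢
  nlinarith

/-- Lemma 1 of the paper: bound on the first term of the Lyapunov function for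
one step of L-SVRP. -/
theorem lsvrp_first_lyapunov_bound
    (d n : ℕ) (hn : 0 < n)
    (f : Fin n → EuclideanSpace ℝ (Fin d) → ℝ) (μ γ : ℝ)
    (hμ : 0 ≤ μ) (hγ : 0 < γ)
    (hdiff : ∀ i, Differentiable ℝ (f i))
    (F : EuclideanSpace ℝ (Fin d) → ℝ)
    (hF : F = fun x => (1 / (n : ℝ)) * ∑ i, f i x)
    (hsc : ∀ i, ∀ x y : EuclideanSpace ℝ (Fin d),
      f i y ≥ f i x + ⟪gradient (f i) x, y - x⟫ + μ / 2 * ‖x - y‖ ^ 2)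
    (xstar : EuclideanSpace ℝ (Fin d)) (hxstar : ∀ x, F xstar ≤ F x)
    (xk wk : EuclideanSpace ℝ (Fin d))
    (ψ : Fin n → EuclideanSpace ℝ (Fin d) → ℝ)
    (hψ : ∀ i, ψ i = fun x => f i x - F x)
    (X : Fin n → EuclideanSpace ℝ (Fin d))
    (hX : ∀ i, ∀ z : EuclideanSpace ℝ (Fin d),
      γ * f i (X i)
          + (1 / 2) * ‖X i - (xk + γ • (gradient (f i) wk - gradient F wk))‖ ^ 2
        ≤ γ * f i z
          + (1 / 2) * ‖z - (xk + γ • (gradient (f i) wk - gradient F wk))‖ ^ 2)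
    (xbar : EuclideanSpace ℝ (Fin d))
    (hxbar : xbar = (1 / (n : ℝ)) • ∑ i, X i) :
    (1 / (n : ℝ)) * ∑ i, ‖X i - xstar‖ ^ 2
      ≤ (1 / (1 + μ * γ)) * ‖xk - xstar‖ ^ 2
        - (1 / (n : ℝ)) * ∑ i, ‖X i - xbar‖ ^ 2
        - (1 / (1 + μ * γ)) * ‖xbar - xk‖ ^ 2
        - (2 / (μ + 1 / γ)) * ((1 / (n : ℝ)) * ∑ i,
            ⟪gradient (ψ i) xbar - gradient (ψ i) wk, X i - xbar⟫) := by
  have hn0 : (n : ℝ) ≠ 0 := by positivity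
  have hFd : Differentiable ℝ F := by rw [hF]; fun_prop
  have hgradψ : ∀ i x, gradient (ψ i) x = gradient (f i) x - gradient F x := by
    intro i x
    rw [hψ i]
    simp only [gradient, fderiv_fun_sub (hdiff i x) (hFd x), map_sub]
  have hgradF : ∀ x, ∑ i, gradient (f i) x = (n : ℝ) • gradient F x := by
    intro x
    have hfd : fderiv ℝ F x = (1 / (n : ℝ)) • ∑ i, fderiv ℝ (f i) x := by
      rw [hF, fderiv_const_mul (by fun_prop), fderiv_fun_sum fun i _ => hdiff i x]
    simp only [gradient, hfd, map_smul, map_sum]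
    rw [smul_smul, mul_one_div_cancel hn0, one_smul]
  have hsumX : ∑ i, (X i - xbar) = 0 := by
    rw [sum_sub_distrib, sum_const, card_univ, Fintype.card_fin, ← Nat.cast_smul_eq_nsmul ℝ,
      hxbar, smul_smul, mul_one_div_cancel hn0, one_smul, sub_self]
  have hsumc : ∑ i, gradient (ψ i) wk = 0 := by
    simp only [hgradψ]
    rw [sum_sub_distrib, hgradF, sum_const, card_univ, Fintype.card_fin,
      ← Nat.cast_smul_eq_nsmul ℝ, sub_self]
  have hgap : 0 ≤ ∑ i, (f i xbar - f i xstar) := by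
    have h := hxstar xbar
    rw [hF] at h
    have := le_of_mul_le_mul_left h (by positivity)
    rw [sum_sub_distrib]
    linarith
  have hstep := sum_le_sum fun i (_ : i ∈ univ) =>
    prox_step_ineq hγ (hdiff i) (hsc i) (c := gradient (ψ i) wk)
      (by rw [hgradψ]; exact hX i) xstar xbar (gradient (ψ i) xbar) (gradient F xbar)
      (by rw [hgradψ]; abel)
  simp only [sum_add_distrib, ← mul_sum, ← inner_sum, ← sum_inner, hsumX, hsumc,
    inner_zero_left, inner_zero_right, sum_const, card_univ, Fintype.card_fin,
    nsmul_eq_mul] at hstep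
  have hm : 0 < 1 + μ * γ := by positivity
  have hgap' := mul_nonneg hγ.le hgap
  have hc : 2 / (μ + 1 / γ) = 2 * γ / (1 + μ * γ) := by
    field_simp
    ring
  rw [hc]
  set A := ∑ i, ‖X i - xstar‖ ^ 2
  set B := ∑ i, ‖X i - xbar‖ ^ 2
  set S := ∑ i, ⟪gradient (ψ i) xbar - gradient (ψ i) wk, X i - xbar⟫
  have hnpos : (0 : ℝ) < n := by positivity
  rw [← sub_nonneg]
  have key : 0 ≤ (n * (‖xk - xstar‖ ^ 2 - ‖xbar - xk‖ ^ 2) - (1 + μ * γ) * A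
      - (1 + μ * γ) * B - 2 * γ * S) / (n * (1 + μ * γ)) :=
    div_nonneg (by linarith) (by positivity)
  convert key using 1
  field_simp
  ring
end

section
/- Let v_1, …, v_n ∈ ℝ^d be arbitrary vectors with average v̄ = (1/n)∑_{i=1}^n v_i, let x_k, w_k ∈ ℝ^d, and let p ∈ (0,1], ξ ∈ [0,1], ζ > 0. Then: (1−p)·(1/n)∑_{i=1}^n ‖w_k − v_i‖² ≤ (1 − p(1−ξ))(1+ζ)‖w_k − x_k‖² + (1 − p(1−ξ))(1+ζ^{-1})‖x_k − v̄‖² − pξ‖w_k − v̄‖² + (1−p)·(1/n)∑_{i=1}^n ‖v̄ − v_i‖². (Here the left-hand side equals the conditional expectation E[‖w_{k+1} − x_{k+1}‖² | x_k, w_k] for the L-SVRP reference-point update w_{k+1} = x_{k+1} with probability p and w_{k+1} = w_k with probability 1−p, when x_{k+1} takes the value v_i with probability 1/n each.) -/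
/-!
The bias–variance identity `(1/n) ∑ ‖w - vᵢ‖² = ‖w - v̄‖² + (1/n) ∑ ‖v̄ - vᵢ‖²` reduces the claim to
a bound on `(1 - p) ‖w - v̄‖²`. Writing `1 - p = (1 - p (1 - ξ)) - p ξ`, Young's inequality for
`w - v̄ = (w - x) + (x - v̄)` is applied to the first part, whose coefficient is nonnegative.
-/

open Finset

/-- The bias–variance decomposition of the mean squared distance to a point. -/
lemma mean_sq_dist_eq {E : Type*} [NormedAddCommGroup E] [InnerProductSpace ℝ E]
    {n : ℕ} (hn : 0 < n) (v : Fin n → E) (m w : E) (hm : m = (1 / (n : ℝ)) • ∑ i, v i) :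
    (1 / (n : ℝ)) * ∑ i, ‖w - v i‖ ^ 2
      = ‖w - m‖ ^ 2 + (1 / (n : ℝ)) * ∑ i, ‖m - v i‖ ^ 2 := by
  have hn' : (n : ℝ) ≠ 0 := by positivity
  have hzero : ∑ i, (m - v i) = 0 := by
    rw [sum_sub_distrib, sum_const, card_univ, Fintype.card_fin, ← Nat.cast_smul_eq_nsmul ℝ, hm,
      smul_smul, mul_one_div_cancel hn', one_smul, sub_self]
  have hterm : ∀ i, ‖w - v i‖ ^ 2
      = ‖w - m‖ ^ 2 + 2 * inner ℝ (w - m) (m - v i) + ‖m - v i‖ ^ 2 := fun i => by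
    rw [← norm_add_sq_real, sub_add_sub_cancel]
  simp_rw [hterm]
  rw [sum_add_distrib, sum_add_distrib, ← mul_sum, ← inner_sum, hzero, inner_zero_right,
    sum_const, card_univ, Fintype.card_fin, nsmul_eq_mul]
  field_simp
  ring

lemma norm_add_sq_le_young {E : Type*} [NormedAddCommGroup E] (a b : E) {ζ : ℝ} (hζ : 0 < ζ) :
    ‖a + b‖ ^ 2 ≤ (1 + ζ) * ‖a‖ ^ 2 + (1 + ζ⁻¹) * ‖b‖ ^ 2 := by
  have htri : ‖a + b‖ ^ 2 ≤ (‖a‖ + ‖b‖) ^ 2 := by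
    gcongr
    exact norm_add_le a b
  have hsq : 0 ≤ ζ⁻¹ * (ζ * ‖a‖ - ‖b‖) ^ 2 := by positivity
  have hexp : ζ⁻¹ * (ζ * ‖a‖ - ‖b‖) ^ 2
      = ζ * ‖a‖ ^ 2 - 2 * (‖a‖ * ‖b‖) + ζ⁻¹ * ‖b‖ ^ 2 := by
    field_simp
    ring
  linarith

/-- Lemma 2 of the paper (bound on the second Lyapunov term), stated as a purely
deterministic inequality about the `n` candidate points `v i` for the next iterate:
the conditional expectation `(1−p)·(1/n)∑‖w_k − v_i‖²` of `‖w_{k+1} − x_{k+1}‖²`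
is bounded using Young-type splittings. -/
theorem lsvrp_second_lyapunov_bound
    (d n : ℕ) (hn : 0 < n)
    (v : Fin n → EuclideanSpace ℝ (Fin d))
    (vbar : EuclideanSpace ℝ (Fin d))
    (hvbar : vbar = (1 / (n : ℝ)) • ∑ i, v i)
    (xk wk : EuclideanSpace ℝ (Fin d))
    (p ξ ζ : ℝ) (hp0 : 0 < p) (hp1 : p ≤ 1)
    (hξ0 : 0 ≤ ξ) (hξ1 : ξ ≤ 1) (hζ : 0 < ζ) :
    (1 - p) * ((1 / (n : ℝ)) * ∑ i, ‖wk - v i‖ ^ 2)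
      ≤ (1 - p * (1 - ξ)) * (1 + ζ) * ‖wk - xk‖ ^ 2
        + (1 - p * (1 - ξ)) * (1 + ζ⁻¹) * ‖xk - vbar‖ ^ 2
        - p * ξ * ‖wk - vbar‖ ^ 2
        + (1 - p) * ((1 / (n : ℝ)) * ∑ i, ‖vbar - v i‖ ^ 2) := by
  have hyoung := norm_add_sq_le_young (wk - xk) (xk - vbar) hζ
  rw [sub_add_sub_cancel] at hyoung
  have hcoef : 0 ≤ 1 - p * (1 - ξ) := by nlinarith
  rw [mean_sq_dist_eq hn v vbar wk hvbar]
  linarith [mul_le_mul_of_nonneg_left hyoung hcoef]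
end

section
/- Let each f_i : ℝ^d → ℝ (i = 1,…,n) be differentiable and μ-strongly convex with μ ≥ 0, satisfy the Hessian similarity condition with constant δ ≥ 0, let f = (1/n)∑ f_i, let x_* be a minimizer of f, and let γ > 0, p ∈ (0,1]. Fix x_k, w_k ∈ ℝ^d, define x_{k+1}(i) = prox_{γ f_i}(x_k + γ(∇f_i(w_k) − ∇f(w_k))). Suppose ξ ∈ [0,1], c > 0, ζ > 0 and r > 0 satisfy: c ≤ 1/((1+μγ)(1 − p(1−ξ))(1+ζ^{-1})), c p ξ ≥ δ²/((μ + 1/γ)²(1 − c(1−p))), and 1 − r = (1 − p(1−ξ))(1+ζ). Then the one-step conditional expectation of the Lyapunov function Λ = ‖x − x_*‖² + c‖w − x‖² satisfies E[Λ_{k+1} | x_k, w_k] ≤ max{ 1/(1+μγ), 1 − r } · (‖x_k − x_*‖² + c‖w_k − x_k‖²), where E[Λ_{k+1} | x_k, w_k] = (1/n)∑_{i=1}^n [ ‖x_{k+1}(i) − x_*‖² + c(1−p)‖w_k − x_{k+1}(i)‖² ]. -/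
/-!
Write `a i = ∇f_i(w) − ∇F(w)`, so that `X i` minimizes the `(μ + 1/γ)`-strongly convex function
`φ_i(z) = f_i(z) − ⟨a i, z⟩ + ‖z − x_k‖² / (2γ)`, and let `y` be the average of the points `X i`.
Strong convexity of `φ_i` is used twice: at its minimizer `X i`, evaluated at `x_*`, and at `y`,
evaluated at `X i`. After averaging over `i`,

* terms linear in `X i − y` with an `i`-independent coefficient vanish, since `y` is the average;
* `∑ i, a i = 0`, since `∇F` is the average of the `∇f_i`;
* `F x_* − F y ≤ 0`;
* the remaining gradient terms are `⟨∇f_i(y) − ∇f_i(w) − (∇F(y) − ∇F(w)), X i − y⟩`, which Young's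
  inequality splits so that the similarity condition at `(y, w)` bounds one half, the other half
  being absorbed by `−(1 − c(1 − p))‖X i − y‖²`.

With `m = 1 + μγ` and `k = c(1 − p)` this gives
`E Λ ≤ (‖x_k − x_*‖² − ‖y − x_k‖²) / m + (k + δ² / ((μ + 1/γ)² (1 − k))) ‖w − y‖²`.
The second condition on `c` bounds the last coefficient by `c (1 − p(1 − ξ))`, and splitting
`‖w − y‖² ≤ (1 + ζ)‖w − x_k‖² + (1 + ζ⁻¹)‖y − x_k‖²` with the first condition removes `‖y − x_k‖²`.

The lemma `lsvrp_pointwise` is the estimate for a single `i`; `prox_stationary` is the optimality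
condition of the proximal step; `gradient_average` computes `∇F`.
-/

open RealInnerProductSpace Finset

section Helpers

variable {E : Type*} [NormedAddCommGroup E] [InnerProductSpace ℝ E]

lemma norm_add_sq_young (a b : E) {ζ : ℝ} (hζ : 0 < ζ) :
    ‖a + b‖ ^ 2 ≤ (1 + ζ) * ‖a‖ ^ 2 + (1 + ζ⁻¹) * ‖b‖ ^ 2 := by
  have h : 0 ≤ ζ⁻¹ * ‖ζ • a - b‖ ^ 2 := by positivity
  rw [norm_sub_sq_real, norm_smul, inner_smul_left, Real.norm_of_nonneg hζ.le] at h
  rw [norm_add_sq_real]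
  have e : ζ⁻¹ * ((ζ * ‖a‖) ^ 2 - 2 * ((starRingEnd ℝ) ζ * ⟪a, b⟫) + ‖b‖ ^ 2)
      = ζ * ‖a‖ ^ 2 - 2 * ⟪a, b⟫ + ζ⁻¹ * ‖b‖ ^ 2 := by
    simp only [conj_trivial]
    field_simp
  rw [e] at h
  linarith

/-- The estimate for one index. Here `u = X − y`, `e = y − x_*`, `q = y − x_k`, `v = w − y`,
`g = ∇f_i(X)`, `b + G = ∇f_i(y) − a` with `G = ∇F(y)`, and the numbers `fs`, `fX`, `fy` are the
values of `f_i` at `x_*`, `X`, `y`. The hypothesis `hfoc` is the optimality condition of the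
proximal step, `hA` and `hB` are the two uses of strong convexity. The inner products on the right
are those which cancel on averaging. -/
lemma lsvrp_pointwise (u e q v g a b G : E) {μ γ k fs fX fy : ℝ} (hμ : 0 ≤ μ) (hγ : 0 < γ)
    (hk : k < 1)
    (hfoc : γ • g = γ • a - (u + q))
    (hA : fX + ⟪g, -(u + e)⟫ + μ / 2 * ‖u + e‖ ^ 2 ≤ fs)
    (hB : fy + ⟪b + G + a, u⟫ + μ / 2 * ‖u‖ ^ 2 ≤ fX) :
    (1 + μ * γ) * (‖u + e‖ ^ 2 + k * ‖v - u‖ ^ 2)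
      ≤ ‖e - q‖ ^ 2 - ‖q‖ ^ 2 + (1 + μ * γ) * k * ‖v‖ ^ 2
        + γ ^ 2 / ((1 + μ * γ) * (1 - k)) * ‖b‖ ^ 2 + 2 * γ * (fs - fy)
        + ⟪u, (-(2 * γ)) • G - (2 : ℝ) • q - (2 * (1 + μ * γ) * k) • v⟫
        + ⟪a, (2 * γ) • e⟫ := by
  have hm : 0 < 1 + μ * γ := by positivity
  have ht : 0 < 1 - k := by linarith
  -- Young's inequality for `⟨b, u⟩`, as the square of `(1 + μγ)(1 − k) u + γ b`.
  have hY : 0 ≤ γ ^ 2 / ((1 + μ * γ) * (1 - k)) * ‖b‖ ^ 2 + 2 * γ * ⟪b, u⟫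
      + (1 + μ * γ) * (1 - k) * ‖u‖ ^ 2 := by
    have h0 : 0 ≤ ((1 + μ * γ) * (1 - k))⁻¹ * ‖((1 + μ * γ) * (1 - k)) • u + γ • b‖ ^ 2 := by
      positivity
    rw [norm_add_sq_real, norm_smul, norm_smul, inner_smul_left, inner_smul_right,
      Real.norm_of_nonneg hγ.le, Real.norm_of_nonneg (mul_pos hm ht).le, real_inner_comm] at h0
    refine h0.trans_eq ?_
    simp only [conj_trivial]
    field_simp
    ring
  have hg : γ * ⟪g, -(u + e)⟫ = ⟪γ • a - (u + q), -(u + e)⟫ := by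
    rw [← hfoc, real_inner_smul_left]
  have hA' := mul_le_mul_of_nonneg_left hA hγ.le
  have hB' := mul_le_mul_of_nonneg_left hB hγ.le
  rw [mul_add, mul_add, hg] at hA'
  simp only [norm_add_sq_real, norm_sub_sq_real, inner_add_left, inner_add_right, inner_sub_left,
    inner_sub_right, inner_neg_right, inner_smul_left, inner_smul_right, real_inner_self_eq_norm_sq,
    conj_trivial] at *
  rw [real_inner_comm u q, real_inner_comm e q, real_inner_comm u v] at *
  rw [real_inner_comm u G] at *
  nlinarith [hA', hB', hY]

variable [CompleteSpace E]

lemma prox_stationary {f : E → ℝ} (hf : Differentiable ℝ f) {γ : ℝ} {X s : E}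
    (hX : ∀ z, γ * f X + (1 / 2) * ‖X - s‖ ^ 2 ≤ γ * f z + (1 / 2) * ‖z - s‖ ^ 2) :
    γ • gradient f X = s - X := by
  have h1 := (hf X).hasGradientAt.hasFDerivAt.const_mul γ
  have h2 := (((hasFDerivAt_id X).sub_const s).norm_sq).const_mul (1 / 2 : ℝ)
  have h3 := h1.add h2
  have hmin : IsLocalMin (fun z => γ * f z + (1 / 2) * ‖z - s‖ ^ 2) X :=
    Filter.Eventually.of_forall hX
  have h4 := hmin.hasFDerivAt_eq_zero h3
  refine ext_inner_right ℝ fun v => ?_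
  have h5 := congrArg (fun L => L v) h4
  simp [inner_sub_left, inner_smul_left] at h5 ⊢
  linarith

lemma gradient_average {n : ℕ} {f : Fin n → E → ℝ} (hdiff : ∀ i, Differentiable ℝ (f i)) (x : E) :
    gradient (fun x => (1 / (n : ℝ)) * ∑ i, f i x) x
      = (1 / (n : ℝ)) • ∑ i, gradient (f i) x := by
  apply HasGradientAt.gradient
  rw [hasGradientAt_iff_hasFDerivAt, map_smul, map_sum]
  exact (HasFDerivAt.fun_sum fun i _ => (hdiff i x).hasGradientAt.hasFDerivAt).const_mul _

end Helpers

/-- Theorem 1 of the paper: one-step contraction of the Lyapunov function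
`Λ = ‖x − x_*‖² + c‖w − x‖²` for L-SVRP, under the conditions on `c, ξ, ζ, r`. -/
theorem lsvrp_one_step_lyapunov_contraction
    (d n : ℕ) (hn : 0 < n)
    (f : Fin n → EuclideanSpace ℝ (Fin d) → ℝ) (μ δ γ p : ℝ)
    (hμ : 0 ≤ μ) (hδ : 0 ≤ δ) (hγ : 0 < γ) (hp0 : 0 < p) (hp1 : p ≤ 1)
    (hdiff : ∀ i, Differentiable ℝ (f i))
    (F : EuclideanSpace ℝ (Fin d) → ℝ)
    (hF : F = fun x => (1 / (n : ℝ)) * ∑ i, f i x)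
    (hsc : ∀ i, ∀ x y : EuclideanSpace ℝ (Fin d),
      f i y ≥ f i x + ⟪gradient (f i) x, y - x⟫ + μ / 2 * ‖x - y‖ ^ 2)
    (hsim : ∀ x y : EuclideanSpace ℝ (Fin d),
      (1 / (n : ℝ)) * ∑ i, ‖gradient (f i) x - gradient (f i) y
          - (gradient F x - gradient F y)‖ ^ 2
        ≤ δ ^ 2 * ‖x - y‖ ^ 2)
    (xstar : EuclideanSpace ℝ (Fin d)) (hxstar : ∀ x, F xstar ≤ F x)
    (xk wk : EuclideanSpace ℝ (Fin d))
    (X : Fin n → EuclideanSpace ℝ (Fin d))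
    (hX : ∀ i, ∀ z : EuclideanSpace ℝ (Fin d),
      γ * f i (X i)
          + (1 / 2) * ‖X i - (xk + γ • (gradient (f i) wk - gradient F wk))‖ ^ 2
        ≤ γ * f i z
          + (1 / 2) * ‖z - (xk + γ • (gradient (f i) wk - gradient F wk))‖ ^ 2)
    (ξ c ζ r : ℝ) (hξ0 : 0 ≤ ξ) (hξ1 : ξ ≤ 1) (hc : 0 < c) (hζ : 0 < ζ) (hr : 0 < r)
    (hcond1 : c ≤ 1 / ((1 + μ * γ) * (1 - p * (1 - ξ)) * (1 + ζ⁻¹)))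
    (hcond2 : c * p * ξ ≥ δ ^ 2 / ((μ + 1 / γ) ^ 2 * (1 - c * (1 - p))))
    (hcond3 : 1 - r = (1 - p * (1 - ξ)) * (1 + ζ)) :
    (1 / (n : ℝ)) * ∑ i, (‖X i - xstar‖ ^ 2 + c * (1 - p) * ‖wk - X i‖ ^ 2)
      ≤ max (1 / (1 + μ * γ)) (1 - r)
          * (‖xk - xstar‖ ^ 2 + c * ‖wk - xk‖ ^ 2) := by
  have hn' : (0 : ℝ) < n := by exact_mod_cast hn
  have hm : 0 < 1 + μ * γ := by positivity
  have hζ' : 0 < ζ⁻¹ := inv_pos.mpr hζ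
  have hQ0 : 0 ≤ 1 - p * (1 - ξ) := by nlinarith
  -- If `1 − p(1 − ξ) = 0`, the first condition reads `c ≤ 1 / 0 = 0`.
  have hQ : 0 < 1 - p * (1 - ξ) := by
    refine lt_of_le_of_ne hQ0 fun h => ?_
    rw [← h] at hcond1
    simp at hcond1
    linarith
  have hc1 : c * ((1 + μ * γ) * (1 - p * (1 - ξ)) * (1 + ζ⁻¹)) ≤ 1 :=
    (le_div_iff₀ (by positivity)).mp hcond1
  obtain ⟨k, hk⟩ : ∃ k, k = c * (1 - p) := ⟨_, rfl⟩
  have hk1 : k < 1 := by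
    have h1 : k ≤ c * (1 - p * (1 - ξ)) := by
      rw [hk]
      exact mul_le_mul_of_nonneg_left (by nlinarith) hc.le
    have h2 : 0 < c * (1 - p * (1 - ξ)) := by positivity
    have h3 : 1 < (1 + μ * γ) * (1 + ζ⁻¹) := by nlinarith [mul_nonneg hμ hγ.le]
    nlinarith
  have ht : 0 < 1 - k := by linarith
  rw [← hk] at hcond2 ⊢
  have hgF : ∀ x, (n : ℝ) • gradient F x = ∑ i, gradient (f i) x := by
    intro x
    rw [hF, gradient_average hdiff, smul_smul, mul_one_div_cancel hn'.ne', one_smul]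
  have hFn : ∀ x, ∑ i, f i x = n * F x := by
    intro x
    rw [hF]
    field_simp
  obtain ⟨y, hy⟩ : ∃ y, y = (1 / (n : ℝ)) • ∑ i, X i := ⟨_, rfl⟩
  have hu : ∑ i, (X i - y) = 0 := by
    rw [sum_sub_distrib, sum_const, card_univ, Fintype.card_fin, hy, ← Nat.cast_smul_eq_nsmul ℝ,
      smul_smul, mul_one_div_cancel hn'.ne', one_smul, sub_self]
  have ha : ∑ i, (gradient (f i) wk - gradient F wk) = 0 := by
    rw [sum_sub_distrib, sum_const, card_univ, Fintype.card_fin, ← Nat.cast_smul_eq_nsmul ℝ,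
      hgF, sub_self]
  have hpt : ∀ i, (1 + μ * γ) * (‖X i - xstar‖ ^ 2 + k * ‖wk - X i‖ ^ 2)
      ≤ ‖xk - xstar‖ ^ 2 - ‖y - xk‖ ^ 2 + (1 + μ * γ) * k * ‖wk - y‖ ^ 2
        + γ ^ 2 / ((1 + μ * γ) * (1 - k)) * ‖gradient (f i) y - gradient (f i) wk
          - (gradient F y - gradient F wk)‖ ^ 2 + 2 * γ * (f i xstar - f i y)
        + ⟪X i - y, (-(2 * γ)) • gradient F y - (2 : ℝ) • (y - xk)
            - (2 * (1 + μ * γ) * k) • (wk - y)⟫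
        + ⟪gradient (f i) wk - gradient F wk, (2 * γ) • (y - xstar)⟫ := by
    intro i
    have h := lsvrp_pointwise (X i - y) (y - xstar) (y - xk) (wk - y) (gradient (f i) (X i))
      (gradient (f i) wk - gradient F wk)
      (gradient (f i) y - gradient (f i) wk - (gradient F y - gradient F wk)) (gradient F y)
      (fs := f i xstar) (fX := f i (X i)) (fy := f i y) hμ hγ hk1
      (by rw [prox_stationary (hdiff i) (hX i)]; abel)
      (by
        have := hsc i (X i) xstar
        rw [show -(X i - y + (y - xstar)) = xstar - X i by abel,
          show X i - y + (y - xstar) = X i - xstar by abel]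
        exact this)
      (by
        have := hsc i y (X i)
        rw [norm_sub_rev y] at this
        rw [show gradient (f i) y - gradient (f i) wk - (gradient F y - gradient F wk)
          + gradient F y + (gradient (f i) wk - gradient F wk) = gradient (f i) y by abel]
        exact this)
    rwa [show X i - y + (y - xstar) = X i - xstar by abel,
      show wk - y - (X i - y) = wk - X i by abel,
      show y - xstar - (y - xk) = xk - xstar by abel] at h
  have hsum := sum_le_sum fun i (_ : i ∈ univ) => hpt i
  simp only [sum_add_distrib, ← mul_sum, ← sum_inner, sum_sub_distrib (f := fun i => f i xstar),
    hu, ha, inner_zero_left, hFn, sum_const, card_univ, Fintype.card_fin, nsmul_eq_mul,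
    sum_sub_distrib (f := fun _ => ‖xk - xstar‖ ^ 2)] at hsum
  have hs := hsim y wk
  rw [one_div, inv_mul_le_iff₀ hn', norm_sub_rev y wk] at hs
  have hmin := hxstar y
  have hcoef : γ ^ 2 / ((1 + μ * γ) * (1 - k)) * δ ^ 2 ≤ (1 + μ * γ) * (c * p * ξ) := by
    have e : γ ^ 2 / ((1 + μ * γ) * (1 - k)) * δ ^ 2
        = (1 + μ * γ) * (δ ^ 2 / ((μ + 1 / γ) ^ 2 * (1 - k))) := by
      have : μ + 1 / γ = (1 + μ * γ) / γ := by field_simp; ring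
      rw [this]
      field_simp
    rw [e]
    exact mul_le_mul_of_nonneg_left hcond2 hm.le
  have hC : 0 ≤ γ ^ 2 / ((1 + μ * γ) * (1 - k)) := by positivity
  obtain ⟨C, hCdef⟩ : ∃ C, C = γ ^ 2 / ((1 + μ * γ) * (1 - k)) := ⟨_, rfl⟩
  rw [← hCdef] at hsum hcoef hC
  have hs1 := mul_le_mul_of_nonneg_left hs hC
  have hs2 := mul_le_mul_of_nonneg_right hcoef
    (mul_nonneg hn'.le (sq_nonneg ‖wk - y‖))
  have hF0 : 2 * γ * (n * F xstar - n * F y) ≤ 0 := by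
    have : n * F xstar ≤ n * F y := mul_le_mul_of_nonneg_left hmin hn'.le
    nlinarith
  have hyoung := norm_add_sq_young (wk - xk) (xk - y) hζ
  rw [sub_add_sub_cancel, norm_sub_rev xk y] at hyoung
  have hkc : k + c * p * ξ = c * (1 - p * (1 - ξ)) := by rw [hk]; ring
  -- The averaged estimate, before splitting `‖wk − y‖²`.
  have havg : (1 + μ * γ) * ((1 / (n : ℝ))
        * ∑ i, (‖X i - xstar‖ ^ 2 + k * ‖wk - X i‖ ^ 2))
      ≤ ‖xk - xstar‖ ^ 2 - ‖y - xk‖ ^ 2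
        + (1 + μ * γ) * (c * (1 - p * (1 - ξ))) * ‖wk - y‖ ^ 2 := by
    rw [mul_left_comm, one_div, inv_mul_le_iff₀ hn', ← hkc, sum_add_distrib, ← mul_sum]
    linarith
  have hfin : (1 + μ * γ) * ((1 / (n : ℝ))
        * ∑ i, (‖X i - xstar‖ ^ 2 + k * ‖wk - X i‖ ^ 2))
      ≤ ‖xk - xstar‖ ^ 2 + (1 + μ * γ) * (1 - r) * (c * ‖wk - xk‖ ^ 2) := by
    have h1 := mul_le_mul_of_nonneg_left hyoung
      (show 0 ≤ (1 + μ * γ) * (c * (1 - p * (1 - ξ))) by positivity)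
    have h2 := mul_le_mul_of_nonneg_right hc1 (sq_nonneg ‖y - xk‖)
    rw [hcond3]
    linarith
  have hmax1 : 1 ≤ (1 + μ * γ) * max (1 / (1 + μ * γ)) (1 - r) := by
    calc (1 : ℝ) = (1 + μ * γ) * (1 / (1 + μ * γ)) := by field_simp
      _ ≤ _ := mul_le_mul_of_nonneg_left (le_max_left _ _) hm.le
  have hmax2 := mul_le_mul_of_nonneg_left (le_max_right (1 / (1 + μ * γ)) (1 - r)) hm.le
  refine le_of_mul_le_mul_left (hfin.trans ?_) hm
  have h1 := mul_le_mul_of_nonneg_right hmax1 (sq_nonneg ‖xk - xstar‖)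
  have h2 := mul_le_mul_of_nonneg_right hmax2 (mul_nonneg hc.le (sq_nonneg ‖wk - xk‖))
  linarith
end

section
/- Let each f_i : ℝ^d → ℝ (i = 1,…,n) be differentiable and μ-strongly convex with μ ≥ 0, satisfy the Hessian similarity condition with constant δ ≥ 0, let f = (1/n)∑ f_i with minimizer x_*, and let γ > 0 and p ∈ (0,1] satisfy [2(3−p)²/(p²(p+1))]·δ²γ² ≤ 1 + μγ. Then the choices c = (2p/(3−p)²)·(1/(1+μγ)), ξ = 1/2, ζ = p/(4−2p), r = p/4 satisfy all three conditions: c ≤ 1/((1+μγ)(1 − p(1−ξ))(1+ζ^{-1})), c p ξ ≥ δ²/((μ + 1/γ)²(1 − c(1−p))), and 1 − r = (1 − p(1−ξ))(1+ζ). -/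
/-!
The claim is elementary algebra in `p` and `m = 1 + μγ ≥ 1`. The first condition reduces to
`(2 - p)(4 - p) = (3 - p)² - 1 ≤ (3 - p)²`, and the third is an identity. For the second,
`(3 - p)² - 4p = (1 - p)(9 - p) ≥ 0` gives `c ≤ 1/2`, hence `1 - c(1 - p) ≥ (1 + p)/2`;
with this bound the condition follows from the stepsize hypothesis, since `μ + 1/γ = m/γ`.
-/

open RealInnerProductSpace Finset

/-- Corollary 1 of the paper (parameter verification): under the stepsize condition
`[2(3−p)²/(p²(p+1))]·δ²γ² ≤ 1 + μγ`, the choices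
`c = (2p/(3−p)²)·(1/(1+μγ))`, `ξ = 1/2`, `ζ = p/(4−2p)`, `r = p/4`
satisfy the three conditions of the one-step Lyapunov contraction theorem. -/
theorem lsvrp_parameter_choice_valid
    (d n : ℕ) (hn : 0 < n)
    (f : Fin n → EuclideanSpace ℝ (Fin d) → ℝ) (μ δ γ p : ℝ)
    (hμ : 0 ≤ μ) (hδ : 0 ≤ δ) (hγ : 0 < γ) (hp0 : 0 < p) (hp1 : p ≤ 1)
    (hdiff : ∀ i, Differentiable ℝ (f i))
    (F : EuclideanSpace ℝ (Fin d) → ℝ)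
    (hF : F = fun x => (1 / (n : ℝ)) * ∑ i, f i x)
    (hsc : ∀ i, ∀ x y : EuclideanSpace ℝ (Fin d),
      f i y ≥ f i x + ⟪gradient (f i) x, y - x⟫ + μ / 2 * ‖x - y‖ ^ 2)
    (hsim : ∀ x y : EuclideanSpace ℝ (Fin d),
      (1 / (n : ℝ)) * ∑ i, ‖gradient (f i) x - gradient (f i) y
          - (gradient F x - gradient F y)‖ ^ 2
        ≤ δ ^ 2 * ‖x - y‖ ^ 2)
    (xstar : EuclideanSpace ℝ (Fin d)) (hxstar : ∀ x, F xstar ≤ F x)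
    (hstep : (2 * (3 - p) ^ 2 / (p ^ 2 * (p + 1))) * δ ^ 2 * γ ^ 2 ≤ 1 + μ * γ)
    (c ξ ζ r : ℝ)
    (hc : c = 2 * p / (3 - p) ^ 2 * (1 / (1 + μ * γ)))
    (hξ : ξ = 1 / 2)
    (hζ : ζ = p / (4 - 2 * p))
    (hr : r = p / 4) :
    c ≤ 1 / ((1 + μ * γ) * (1 - p * (1 - ξ)) * (1 + ζ⁻¹))
      ∧ c * p * ξ ≥ δ ^ 2 / ((μ + 1 / γ) ^ 2 * (1 - c * (1 - p)))
      ∧ 1 - r = (1 - p * (1 - ξ)) * (1 + ζ) := by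
  obtain ⟨m, hm⟩ : ∃ m, m = 1 + μ * γ := ⟨_, rfl⟩
  have hm1 : 1 ≤ m := by
    have := mul_nonneg hμ hγ.le
    linarith
  have hm0 : 0 < m := by linarith
  rw [← hm] at hstep hc ⊢
  have h2p : 0 < 2 - p := by linarith
  have h3p : 0 < 3 - p := by linarith
  have h4p : 0 < 4 - p := by linarith
  have hc' : c = 2 * p / ((3 - p) ^ 2 * m) := by
    rw [hc]
    field_simp
  refine ⟨?_, ?_, ?_⟩
  · have hden : m * (1 - p * (1 - ξ)) * (1 + ζ⁻¹) = m * ((2 - p) * (4 - p)) / (2 * p) := by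
      rw [hξ, hζ, inv_div]
      field_simp
      ring
    rw [hden, hc', one_div_div]
    have hle : (2 - p) * (4 - p) ≤ (3 - p) ^ 2 := by nlinarith
    rw [mul_comm m]
    gcongr
  · have hchalf : c ≤ 1 / 2 := by
      rw [hc', div_le_div_iff₀ (by positivity) (by norm_num)]
      have h1 : 4 * p ≤ (3 - p) ^ 2 := by nlinarith
      nlinarith [mul_nonneg (sq_nonneg (3 - p)) (sub_nonneg.2 hm1)]
    have hD : (p + 1) / 2 ≤ 1 - c * (1 - p) := by
      nlinarith [mul_nonneg (sub_nonneg.2 hchalf) (sub_nonneg.2 hp1)]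
    have hD0 : 0 < 1 - c * (1 - p) := by linarith
    have hs : 2 * (3 - p) ^ 2 * (δ ^ 2 * γ ^ 2) ≤ m * (p ^ 2 * (p + 1)) := by
      rw [← div_le_iff₀ (by positivity)]
      calc _ = _ := by ring
        _ ≤ m := hstep
    have hμγ : μ + 1 / γ = m / γ := by
      rw [hm]
      field_simp
      ring
    have hR : δ ^ 2 / ((m / γ) ^ 2 * (1 - c * (1 - p)))
        = δ ^ 2 * γ ^ 2 / (m ^ 2 * (1 - c * (1 - p))) := by
      field_simp
    have hL : c * p * ξ = p ^ 2 / ((3 - p) ^ 2 * m) := by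
      rw [hc', hξ]
      field_simp
    rw [hμγ, hR, hL, ge_iff_le, div_le_div_iff₀ (by positivity) (by positivity)]
    calc δ ^ 2 * γ ^ 2 * ((3 - p) ^ 2 * m)
        = 2 * (3 - p) ^ 2 * (δ ^ 2 * γ ^ 2) * (m / 2) := by ring
      _ ≤ m * (p ^ 2 * (p + 1)) * (m / 2) := by gcongr
      _ = p ^ 2 * (m ^ 2 * ((p + 1) / 2)) := by ring
      _ ≤ p ^ 2 * (m ^ 2 * (1 - c * (1 - p))) := by gcongr
  · rw [hr, hξ, hζ, show 4 - 2 * p = 2 * (2 - p) by ring]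
    field_simp
    ring
end

section
/- Let each f_i : ℝ^d → ℝ (i = 1,…,n) be differentiable and μ-strongly convex with μ ≥ 0, satisfy the Hessian similarity condition with constant δ ≥ 0, let f = (1/n)∑ f_i with minimizer x_*, and let γ > 0, p ∈ (0,1] satisfy [2(3−p)²/(p²(p+1))]·δ²γ² ≤ 1 + μγ. Let (x_k, w_k)_{k≥0} be the L-SVRP process started from x_0 = w_0 with i.i.d. uniform indices i_k and independent Bernoulli(p) reference updates. Then for every K ≥ 0, E[‖x_K − x_*‖²] ≤ max{ 1/(1+μγ), 1 − p/4 }^K · ‖x_0 − x_*‖². -/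
open RealInnerProductSpace Finset

/-!
The proof is a Lyapunov argument. Put `M = 1 + μγ`, `c = 2p/(4-p)` and
`V(x, w) = ‖x - x⋆‖² + (c/M) ‖x - w‖²`. Since `w₀ = x₀`, the second term vanishes at the start, so
it suffices that one step contracts `V` in expectation by `max (1/M) (1 - p/4)`.

Fix `(x, w)`, let `Xᵢ` be the next iterate if index `i` is drawn, and let `m` be the average of
the `Xᵢ`. Optimality of the prox gives `Xᵢ = x + γ(∇fᵢ(w) - ∇F(w)) - γ∇fᵢ(Xᵢ)`. Strong convexity of
`fᵢ` is used twice, from `Xᵢ` to `x⋆` and from `m` to `Xᵢ` (`prox_step_bound`). The point `m` does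
not depend on `i`, so Hessian similarity applies to the pair `(m, w)`; as `∑ (Xᵢ - m) = 0`, all terms
linear in `Xᵢ - m` with a fixed coefficient average out, including the one with `∇F(m)`, and no
smoothness is needed. With `q = c(1-p)` this yields (`averaged_step_bound`)

  `avg (M‖Xᵢ - x⋆‖² + q‖Xᵢ - w‖²) ≤ ‖x - x⋆‖² - ‖m - x‖² + (q + γ²δ²/(M-q)) ‖m - w‖²`.

The stepsize condition bounds the last coefficient by `p/(2+p)` (`stepsize_coeff_bound`), and
`p/(2+p) ‖m - w‖² ≤ (p/2) ‖x - w‖² + ‖m - x‖²` by Young's inequality, where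
`p/2 = c(1 - p/4)`.
-/

/-- A function of the history that contracts by `ρ` in expectation at each draw contracts by `ρ ^ K`
over `K` independent draws with weights `wt`. -/
lemma expectation_contraction {A : Type*} [Fintype A] (wt : A → ℝ) (hwt : ∀ a, 0 ≤ wt a)
    (Φ : List A → ℝ) (ρ : ℝ) (hρ : 0 ≤ ρ)
    (hstep : ∀ l, ∑ a, wt a * Φ (l ++ [a]) ≤ ρ * Φ l) (K : ℕ) :
    ∑ ω : Fin K → A, (∏ k, wt (ω k)) * Φ (List.ofFn ω) ≤ ρ ^ K * Φ [] := by
  induction K with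
  | zero => simp
  | succ K ih =>
    rw [← (Fin.snocEquiv (fun _ : Fin (K + 1) => A)).sum_comp, Fintype.sum_prod_type_right]
    calc _ = ∑ ω : Fin K → A, (∏ k, wt (ω k)) * ∑ a, wt a * Φ (List.ofFn ω ++ [a]) := by
          refine Finset.sum_congr rfl fun ω _ => ?_
          rw [Finset.mul_sum]
          refine Finset.sum_congr rfl fun a _ => ?_
          rw [List.ofFn_succ', Fin.prod_univ_castSucc]
          simp [Fin.snocEquiv, mul_assoc]
      _ ≤ ∑ ω : Fin K → A, (∏ k, wt (ω k)) * (ρ * Φ (List.ofFn ω)) := by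
          refine Finset.sum_le_sum fun ω _ => ?_
          exact mul_le_mul_of_nonneg_left (hstep _) (Finset.prod_nonneg fun k _ => hwt _)
      _ = ρ * ∑ ω : Fin K → A, (∏ k, wt (ω k)) * Φ (List.ofFn ω) := by
          rw [Finset.mul_sum]
          exact Finset.sum_congr rfl fun ω _ => by ring
      _ ≤ ρ * (ρ ^ K * Φ []) := mul_le_mul_of_nonneg_left ih hρ
      _ = _ := by ring

section InnerProduct

variable {E : Type*} [NormedAddCommGroup E] [InnerProductSpace ℝ E]

/-- First-order optimality condition for the proximity operator. -/
lemma prox_optimality_s7 [CompleteSpace E] {g : E → ℝ} (hg : Differentiable ℝ g) {γ : ℝ} {u y : E}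
    (hmin : ∀ z, γ * g u + (1 / 2) * ‖u - y‖ ^ 2 ≤ γ * g z + (1 / 2) * ‖z - y‖ ^ 2) :
    u + γ • gradient g u = y := by
  have h1 : HasFDerivAt g (innerSL ℝ (gradient g u)) u :=
    ((hg u).hasGradientAt).hasFDerivAt
  have h2 : HasFDerivAt (fun z : E => ‖z - y‖ ^ 2) (2 • (innerSL ℝ (u - y))) u := by
    simpa using ((hasFDerivAt_id u).sub_const y).norm_sq
  have h3 := (h1.const_mul γ).add (h2.const_mul (1 / 2))
  have hloc : IsLocalMin (fun z => γ * g z + (1 / 2) * ‖z - y‖ ^ 2) u :=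
    Filter.Eventually.of_forall hmin
  have h4 := hloc.hasFDerivAt_eq_zero h3
  generalize gradient g u = G at h4 ⊢
  have h5 : γ • G + (u - y) = 0 := by
    refine ext_inner_right ℝ fun v => ?_
    have := DFunLike.congr_fun h4 v
    simp at this
    simp only [inner_add_left, inner_sub_left, real_inner_smul_left, inner_zero_left]
    linarith
  rw [← sub_eq_zero, ← h5]
  abel

/-- The bound for a single index. Here `g`, `gm`, `gX` stand for `∇fᵢ(w) - ∇F(w)`, `∇fᵢ(m)`,
`∇fᵢ(X)`, and `Gm` for `∇F(m)`; `fs`, `fm`, `fX` are the values of `fᵢ` at `x⋆`, `m`, `X`. -/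
lemma prox_step_bound {x w s X m g gm gX Gm : E} {fs fm fX μ γ q : ℝ} (hγ : 0 < γ)
    (hq : q < 1 + μ * γ)
    (hX : X + γ • gX = x + γ • g)
    (h1 : fs ≥ fX + ⟪gX, s - X⟫ + μ / 2 * ‖X - s‖ ^ 2)
    (h2 : fX ≥ fm + ⟪gm, X - m⟫ + μ / 2 * ‖m - X‖ ^ 2) :
    (1 + μ * γ) * ‖X - s‖ ^ 2 + q * ‖X - w‖ ^ 2 ≤
      ‖x - s‖ ^ 2 - ‖m - x‖ ^ 2 + q * ‖m - w‖ ^ 2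
        + γ ^ 2 / (1 + μ * γ - q) * ‖gm - g - Gm‖ ^ 2 + 2 * γ * (fs - fm)
        + ⟪(2 * q) • (m - w) - (2 : ℝ) • (m - x) - (2 * γ) • Gm, X - m⟫
        + 2 * γ * ⟪g, m - s⟫ := by
  set M := 1 + μ * γ with hM
  have hr : 0 < M - q := by linarith
  set e := gm - g - Gm with he
  have hgm : gm = e + g + Gm := by rw [he]; abel
  have young : -(2 * γ * ⟪e, X - m⟫) ≤ (M - q) * ‖X - m‖ ^ 2 + γ ^ 2 / (M - q) * ‖e‖ ^ 2 := by
    have h := norm_add_sq_real ((M - q) • (X - m)) (γ • e)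
    have h0 := sq_nonneg ‖(M - q) • (X - m) + γ • e‖
    rw [h, norm_smul, norm_smul, mul_pow, mul_pow, Real.norm_eq_abs, Real.norm_eq_abs, sq_abs,
      sq_abs, real_inner_smul_left, real_inner_smul_right, real_inner_comm] at h0
    have h3 : 0 ≤ (M - q)⁻¹ * ((M - q) ^ 2 * ‖X - m‖ ^ 2
        + 2 * ((M - q) * (γ * ⟪e, X - m⟫)) + γ ^ 2 * ‖e‖ ^ 2) := mul_nonneg (by positivity) h0
    have h4 : (M - q)⁻¹ * ((M - q) ^ 2 * ‖X - m‖ ^ 2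
        + 2 * ((M - q) * (γ * ⟪e, X - m⟫)) + γ ^ 2 * ‖e‖ ^ 2)
        = (M - q) * ‖X - m‖ ^ 2 + 2 * γ * ⟪e, X - m⟫ + γ ^ 2 / (M - q) * ‖e‖ ^ 2 := by
      field_simp
    linarith
  have h12 : γ * (fm + ⟪gm, X - m⟫ + μ / 2 * ‖m - X‖ ^ 2 + ⟪gX, s - X⟫
      + μ / 2 * ‖X - s‖ ^ 2) ≤ γ * fs := mul_le_mul_of_nonneg_left (by linarith) hγ.le
  have hgX : γ * ⟪gX, s - X⟫ = ⟪x - X, s - X⟫ + γ * ⟪g, s - X⟫ := by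
    rw [← real_inner_smul_left, ← real_inner_smul_left, ← inner_add_left]
    congr 1
    rw [eq_sub_of_add_eq' hX]; abel
  -- All points are expressed through the displacement `y = X - m` from the mean.
  obtain ⟨y, rfl⟩ : ∃ y, X = m + y := ⟨X - m, by abel⟩
  rw [mul_add, mul_add, mul_add, mul_add, hgX, hgm] at h12
  rw [norm_sub_rev m (m + y)] at h12
  simp only [add_sub_cancel_left] at *
  have e1 : ‖m + y - w‖ ^ 2 = ‖m - w‖ ^ 2 + 2 * ⟪m - w, y⟫ + ‖y‖ ^ 2 := by
    rw [← norm_add_sq_real]; congr 2; abel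
  have e2 : ‖x - s‖ ^ 2 = ‖x - (m + y)‖ ^ 2 - 2 * ⟪x - (m + y), s - (m + y)⟫
      + ‖m + y - s‖ ^ 2 := by
    rw [norm_sub_rev (m + y) s, ← norm_sub_sq_real]; congr 2; abel
  have e3 : ‖x - (m + y)‖ ^ 2 = ‖m - x‖ ^ 2 + 2 * ⟪m - x, y⟫ + ‖y‖ ^ 2 := by
    rw [← norm_add_sq_real, norm_sub_rev]; congr 2; abel
  have e4 : ⟪g, s - (m + y)⟫ = - ⟪g, m - s⟫ - ⟪g, y⟫ := by
    simp only [inner_sub_right, inner_add_right]; ring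
  rw [e4] at h12
  rw [e1]
  simp only [inner_add_left, inner_sub_left (𝕜 := ℝ) (_ - _) _ y, inner_sub_left (𝕜 := ℝ) (_ • _) _ y,
    real_inner_smul_left] at h12 ⊢
  have hMe : M * ‖m + y - s‖ ^ 2 = ‖m + y - s‖ ^ 2 + γ * μ * ‖m + y - s‖ ^ 2 := by rw [hM]; ring
  have hMy : (M - q) * ‖y‖ ^ 2 = ‖y‖ ^ 2 + γ * μ * ‖y‖ ^ 2 - q * ‖y‖ ^ 2 := by rw [hM]; ring
  rw [hMe]
  rw [hMy] at young
  linarith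

/-- The average over the indices of `prox_step_bound`, with `m` the mean of the `X i`. -/
lemma averaged_step_bound {n : ℕ} (hn : 0 < n) {f : Fin n → E → ℝ} {gf : Fin n → E → E}
    {F : E → ℝ} {G : E → E} {μ δ γ q : ℝ} (hγ : 0 < γ) (hq : q < 1 + μ * γ)
    (hF : ∀ x, F x = (1 / (n : ℝ)) * ∑ i, f i x)
    (hG : ∀ x, G x = (1 / (n : ℝ)) • ∑ i, gf i x)
    (hsc : ∀ i, ∀ x y : E, f i y ≥ f i x + ⟪gf i x, y - x⟫ + μ / 2 * ‖x - y‖ ^ 2)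
    (hsim : ∀ x y : E, (1 / (n : ℝ)) * ∑ i, ‖gf i x - gf i y - (G x - G y)‖ ^ 2
      ≤ δ ^ 2 * ‖x - y‖ ^ 2)
    {s : E} (hs : ∀ x, F s ≤ F x) {x w : E} {X : Fin n → E}
    (hX : ∀ i, X i + γ • gf i (X i) = x + γ • (gf i w - G w)) :
    ∃ m : E, (1 / (n : ℝ)) * ∑ i, ((1 + μ * γ) * ‖X i - s‖ ^ 2 + q * ‖X i - w‖ ^ 2) ≤
      ‖x - s‖ ^ 2 - ‖m - x‖ ^ 2 + (q + γ ^ 2 * δ ^ 2 / (1 + μ * γ - q)) * ‖m - w‖ ^ 2 := by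
  have hN : (0 : ℝ) < n := by exact_mod_cast hn
  set m : E := (1 / (n : ℝ)) • ∑ i, X i with hm
  refine ⟨m, ?_⟩
  have hsumX : ∑ i, (X i - m) = 0 := by
    rw [Finset.sum_sub_distrib, Finset.sum_const, hm, Finset.card_univ, Fintype.card_fin,
      ← Nat.cast_smul_eq_nsmul ℝ, smul_smul, mul_one_div_cancel hN.ne', one_smul, sub_self]
  have hsumg : ∑ i, (gf i w - G w) = 0 := by
    rw [Finset.sum_sub_distrib, Finset.sum_const, hG, Finset.card_univ, Fintype.card_fin,
      ← Nat.cast_smul_eq_nsmul ℝ, smul_smul, mul_one_div_cancel hN.ne', one_smul, sub_self]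
  have hb := fun i => prox_step_bound (w := w) (Gm := G m) hγ hq (hX i) (hsc i (X i) s)
    (hsc i m (X i))
  have hsum := Finset.sum_le_sum fun i (_ : i ∈ Finset.univ) => hb i
  simp only [Finset.sum_add_distrib, ← inner_sum, ← sum_inner, ← Finset.mul_sum,
    hsumX, hsumg, inner_zero_right, inner_zero_left, Finset.sum_sub_distrib, Finset.sum_const,
    Finset.card_univ, Fintype.card_fin, nsmul_eq_mul, mul_zero, add_zero] at hsum
  have hsimm := hsim m w
  have heq : ∀ i, gf i m - (gf i w - G w) - G m = gf i m - gf i w - (G m - G w) :=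
    fun i => by abel
  simp only [heq] at hsum
  have hsm := hs m
  rw [hF, hF] at hsm
  have hk : 0 ≤ γ ^ 2 / (1 + μ * γ - q) := div_nonneg (by positivity) (by linarith)
  have h1 := mul_le_mul_of_nonneg_left hsimm hk
  have h2 := mul_le_mul_of_nonneg_left hsm hγ.le
  have h3 := mul_le_mul_of_nonneg_left hsum (one_div_pos.mpr hN).le
  have hNN : 1 / (n : ℝ) * n = 1 := one_div_mul_cancel hN.ne'
  simp only [Finset.sum_add_distrib, ← Finset.mul_sum]
  refine h3.trans ?_
  have hexp : ∀ A B C S T U : ℝ, 1 / (n : ℝ) * (n * A - n * B + q * (n * C)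
      + γ ^ 2 / (1 + μ * γ - q) * S + 2 * γ * (T - U))
      = A - B + q * C + γ ^ 2 / (1 + μ * γ - q) * (1 / (n : ℝ) * S)
        + 2 * (γ * (1 / (n : ℝ) * T)) - 2 * (γ * (1 / (n : ℝ) * U)) := by
    intro A B C S T U
    linear_combination (A - B + q * C) * hNN
  rw [hexp]
  have hc : (q + γ ^ 2 * δ ^ 2 / (1 + μ * γ - q)) * ‖m - w‖ ^ 2
      = q * ‖m - w‖ ^ 2 + γ ^ 2 / (1 + μ * γ - q) * (δ ^ 2 * ‖m - w‖ ^ 2) := by ring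
  rw [hc]
  linarith

end InnerProduct

/-- Young's inequality with the ratio `p/2`, normalized so that the `‖m - x‖²` coefficient is `1`. -/
lemma young_reference {E : Type*} [NormedAddCommGroup E] {p : ℝ} (hp : 0 < p) (m x w : E) :
    p / (2 + p) * ‖m - w‖ ^ 2 ≤ p / 2 * ‖x - w‖ ^ 2 + ‖m - x‖ ^ 2 := by
  have htri : ‖m - w‖ ≤ ‖m - x‖ + ‖x - w‖ := norm_sub_le_norm_sub_add_norm_sub m x w
  have h1 : ‖m - w‖ ^ 2 ≤ (‖m - x‖ + ‖x - w‖) ^ 2 := by gcongr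
  rw [div_mul_eq_mul_div, div_le_iff₀ (by linarith)]
  have h2 := mul_le_mul_of_nonneg_left h1 hp.le
  nlinarith [sq_nonneg (p * ‖x - w‖ - 2 * ‖m - x‖)]

/-- The stepsize condition controls the coefficient of `‖m - w‖²` in `averaged_step_bound` for
`q = 2p(1-p)/(4-p)`. -/
lemma stepsize_coeff_bound {M δ γ p : ℝ} (hM : 1 ≤ M) (hp0 : 0 < p) (hp1 : p ≤ 1)
    (hstep : (2 * (3 - p) ^ 2 / (p ^ 2 * (p + 1))) * δ ^ 2 * γ ^ 2 ≤ M) :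
    2 * p / (4 - p) * (1 - p) + γ ^ 2 * δ ^ 2 / (M - 2 * p / (4 - p) * (1 - p)) ≤ p / (2 + p) := by
  have h4 : 0 < 4 - p := by linarith
  have h3 : 0 < 3 - p := by linarith
  set q := 2 * p / (4 - p) * (1 - p) with hq
  have hq0 : 0 ≤ q := mul_nonneg (by positivity) (by linarith)
  have h1q : 1 - q = (4 - 3 * p + 2 * p ^ 2) / (4 - p) := by rw [hq]; field_simp; ring
  have hnum : 0 < 4 - 3 * p + 2 * p ^ 2 := by nlinarith
  have h1q0 : 0 < 1 - q := by rw [h1q]; positivity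
  have hκ : γ ^ 2 * δ ^ 2 ≤ p ^ 2 * (p + 1) / (2 * (3 - p) ^ 2) * M := by
    have h := mul_le_mul_of_nonneg_left hstep
      (show 0 ≤ p ^ 2 * (p + 1) / (2 * (3 - p) ^ 2) by positivity)
    refine le_trans (le_of_eq ?_) h
    field_simp
  have hgap : p / (2 + p) - q = p ^ 2 * (1 + 2 * p) / ((2 + p) * (4 - p)) := by
    rw [hq]; field_simp; ring
  -- The worst case is `M = 1`, where the claim is a polynomial inequality in `p`.
  have hpoly : p ^ 2 * (p + 1) / (2 * (3 - p) ^ 2) ≤ (p / (2 + p) - q) * (1 - q) := by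
    rw [hgap, h1q, div_mul_div_comm, div_le_div_iff₀ (by positivity) (by positivity)]
    have key : (1 + p) * (2 + p) * (4 - p) ^ 2
        ≤ 2 * (1 + 2 * p) * (4 - 3 * p + 2 * p ^ 2) * (3 - p) ^ 2 := by
      have hsq : (4 - p) ^ 2 ≤ 9 / 4 * (3 - p) ^ 2 := by nlinarith
      have hcub : 9 / 4 * ((1 + p) * (2 + p)) ≤ 2 * (1 + 2 * p) * (4 - 3 * p + 2 * p ^ 2) := by
        nlinarith [mul_nonneg hp0.le (sq_nonneg (p - 16 / 25)), sq_nonneg p]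
      calc (1 + p) * (2 + p) * (4 - p) ^ 2 ≤ (1 + p) * (2 + p) * (9 / 4 * (3 - p) ^ 2) := by gcongr
        _ = 9 / 4 * ((1 + p) * (2 + p)) * (3 - p) ^ 2 := by ring
        _ ≤ _ := by gcongr
    have := mul_le_mul_of_nonneg_left key (sq_nonneg p)
    linarith
  have hMq : (1 - q) * M ≤ M - q := by nlinarith
  have hgap0 : 0 ≤ p / (2 + p) - q := by rw [hgap]; positivity
  have hdiv : γ ^ 2 * δ ^ 2 / (M - q) ≤ p / (2 + p) - q := by
    rw [div_le_iff₀ (by linarith)]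
    calc γ ^ 2 * δ ^ 2 ≤ p ^ 2 * (p + 1) / (2 * (3 - p) ^ 2) * M := hκ
      _ ≤ (p / (2 + p) - q) * (1 - q) * M := by gcongr
      _ = (p / (2 + p) - q) * ((1 - q) * M) := by ring
      _ ≤ _ := mul_le_mul_of_nonneg_left hMq hgap0
  linarith

/-- Corollary 1 of the paper: linear convergence of L-SVRP. The random process is
modelled by the deterministic map `state` applied to a finite history
`ω : Fin K → Fin n × Bool` of (sampled index, Bernoulli coin) draws; the expectation
`E[‖x_K − x_*‖²]` is the weighted sum over all histories, where a draw `(i, b)` has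
probability `(1/n)·(p if b else 1−p)`. -/
theorem lsvrp_linear_convergence
    (d n : ℕ) (hn : 0 < n)
    (f : Fin n → EuclideanSpace ℝ (Fin d) → ℝ) (μ δ γ p : ℝ)
    (hμ : 0 ≤ μ) (hδ : 0 ≤ δ) (hγ : 0 < γ) (hp0 : 0 < p) (hp1 : p ≤ 1)
    (hdiff : ∀ i, Differentiable ℝ (f i))
    (F : EuclideanSpace ℝ (Fin d) → ℝ)
    (hF : F = fun x => (1 / (n : ℝ)) * ∑ i, f i x)
    (hsc : ∀ i, ∀ x y : EuclideanSpace ℝ (Fin d),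
      f i y ≥ f i x + ⟪gradient (f i) x, y - x⟫ + μ / 2 * ‖x - y‖ ^ 2)
    (hsim : ∀ x y : EuclideanSpace ℝ (Fin d),
      (1 / (n : ℝ)) * ∑ i, ‖gradient (f i) x - gradient (f i) y
          - (gradient F x - gradient F y)‖ ^ 2
        ≤ δ ^ 2 * ‖x - y‖ ^ 2)
    (xstar : EuclideanSpace ℝ (Fin d)) (hxstar : ∀ x, F xstar ≤ F x)
    (hstep : (2 * (3 - p) ^ 2 / (p ^ 2 * (p + 1))) * δ ^ 2 * γ ^ 2 ≤ 1 + μ * γ)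
    -- the proximity operator of `γ f_i`
    (prox : Fin n → EuclideanSpace ℝ (Fin d) → EuclideanSpace ℝ (Fin d))
    (hprox : ∀ i, ∀ x z : EuclideanSpace ℝ (Fin d),
      γ * f i (prox i x) + (1 / 2) * ‖prox i x - x‖ ^ 2
        ≤ γ * f i z + (1 / 2) * ‖z - x‖ ^ 2)
    -- the L-SVRP process, as a function of the history of random draws
    (x0 : EuclideanSpace ℝ (Fin d))
    (state : List (Fin n × Bool) →
      EuclideanSpace ℝ (Fin d) × EuclideanSpace ℝ (Fin d))
    (hstate0 : state [] = (x0, x0))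
    (hstateS : ∀ (ω : List (Fin n × Bool)) (i : Fin n) (b : Bool),
      state (ω ++ [(i, b)]) =
        (prox i ((state ω).1
            + γ • (gradient (f i) (state ω).2 - gradient F (state ω).2)),
         if b then
           prox i ((state ω).1
              + γ • (gradient (f i) (state ω).2 - gradient F (state ω).2))
         else (state ω).2))
    (K : ℕ) :
    ∑ ω : Fin K → Fin n × Bool,
        (∏ k, (1 / (n : ℝ)) * (if (ω k).2 then p else 1 - p))
          * ‖(state (List.ofFn ω)).1 - xstar‖ ^ 2
      ≤ max (1 / (1 + μ * γ)) (1 - p / 4) ^ K * ‖x0 - xstar‖ ^ 2 := by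
  have hN : (0 : ℝ) < n := by exact_mod_cast hn
  have hM1 : 1 ≤ 1 + μ * γ := by nlinarith
  have h4 : 0 < 4 - p := by linarith
  have hG : ∀ x, gradient F x = (1 / (n : ℝ)) • ∑ i, gradient (f i) x := by
    intro x
    refine HasGradientAt.gradient ?_
    rw [hasGradientAt_iff_hasFDerivAt, hF]
    have h := (HasFDerivAt.fun_sum fun i (_ : i ∈ Finset.univ) =>
      ((hdiff i x).hasGradientAt).hasFDerivAt).const_mul (1 / (n : ℝ))
    simpa [map_sum] using h
  set M := 1 + μ * γ with hM
  set c := 2 * p / (4 - p) with hc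
  have hc0 : 0 ≤ c := by positivity
  have hq : c * (1 - p) < M := by
    have : c * (1 - p) < 1 := by
      rw [hc, div_mul_eq_mul_div, div_lt_one h4]; nlinarith
    linarith
  have hM0 : 0 < M := by linarith
  set ρ := max (1 / M) (1 - p / 4) with hρ
  have hρ0 : 0 ≤ ρ := le_max_of_le_left (by positivity)
  have hmain := expectation_contraction
    (fun a : Fin n × Bool => (1 / (n : ℝ)) * (if a.2 then p else 1 - p))
    (fun a => mul_nonneg (by positivity) (by split_ifs <;> linarith))
    (fun l => ‖(state l).1 - xstar‖ ^ 2 + c / M * ‖(state l).1 - (state l).2‖ ^ 2) ρ hρ0 ?_ K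
  · rw [hstate0] at hmain
    simp only [sub_self, norm_zero, ne_eq, OfNat.ofNat_ne_zero, not_false_eq_true, zero_pow,
      mul_zero, add_zero] at hmain
    refine le_trans (Finset.sum_le_sum fun ω _ => mul_le_mul_of_nonneg_left ?_ ?_) hmain
    · have : 0 ≤ c / M * ‖(state (List.ofFn ω)).1 - (state (List.ofFn ω)).2‖ ^ 2 := by positivity
      linarith
    · exact Finset.prod_nonneg fun k _ => mul_nonneg (by positivity) (by split_ifs <;> linarith)
  · intro l
    simp only [hstateS, Fintype.sum_prod_type, Fintype.sum_bool]
    set x := (state l).1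
    set w := (state l).2
    obtain ⟨m, hm⟩ := averaged_step_bound (q := c * (1 - p)) hn hγ hq (fun x => by rw [hF]) hG hsc
      hsim hxstar
      (X := fun i => prox i (x + γ • (gradient (f i) w - gradient F w))) (x := x) (w := w)
      (fun i => prox_optimality_s7 (hdiff i) (hprox i _))
    rw [← hM] at hm
    have hcoef := mul_le_mul_of_nonneg_right (stepsize_coeff_bound hM1 hp0 hp1 hstep)
      (sq_nonneg ‖m - w‖)
    have hy := young_reference hp0 m x w
    have hbound := hm.trans (show _ ≤ ‖x - xstar‖ ^ 2 + p / 2 * ‖x - w‖ ^ 2 by linarith)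
    have hcp : p / 2 = c * (1 - p / 4) := by rw [hc]; field_simp; ring
    rw [hcp] at hbound
    calc _ = 1 / M * ((1 / (n : ℝ)) * ∑ i,
          (M * ‖prox i (x + γ • (gradient (f i) w - gradient F w)) - xstar‖ ^ 2
          + c * (1 - p) * ‖prox i (x + γ • (gradient (f i) w - gradient F w)) - w‖ ^ 2)) := by
          rw [Finset.mul_sum, Finset.mul_sum]
          refine Finset.sum_congr rfl fun i _ => ?_
          simp
          field_simp
          ring
      _ ≤ 1 / M * (‖x - xstar‖ ^ 2 + c * (1 - p / 4) * ‖x - w‖ ^ 2) := by gcongr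
      _ = 1 / M * ‖x - xstar‖ ^ 2 + (1 - p / 4) * (c / M * ‖x - w‖ ^ 2) := by ring
      _ ≤ ρ * ‖x - xstar‖ ^ 2 + ρ * (c / M * ‖x - w‖ ^ 2) := by
          gcongr
          · exact le_max_left _ _
          · exact le_max_right _ _
      _ = _ := by ring
end
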